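/- Let N ≥ 2 and let q ∈ ℂ be transcendental over ℚ. Let F be the free unital associative ℂ-algebra on N² generators u^i_j (1 ≤ i, j ≤ N), V the ℂ-span of the generators, u the N×N matrix over F with (i,j) entry u^i_j, and u₁ = u ⊗ I, u₂ = I ⊗ u the corresponding N²×N² matrices over F. Regard the standard R-matrix R̂ of GL_q(N) as a scalar N²×N² matrix. Let J ⊆ F be the two-sided ideal generated by the N⁴ entries of the matrix R̂ u₁ u₂ − u₁ u₂ R̂ (the RTT relations). Then for every k ≥ 0, dim_ℂ ( V^{⊗k} / (J ∩ V^{⊗k}) ) = C(N² + k − 1, k); that is, the quantum matrix bialgebra M_q(N) = F/J is a flat deformation of the polynomial ring in N² variables. -/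

import Mathlib

/-!
The degree-`k` component of the quantum matrix bialgebra has the Poincaré–Birkhoff–Witt basis formed
by the words of length `k` in the generators whose letters are in lexicographic order. There are as
many of these as multisets of size `k` on `N²` letters, namely `C(N² + k - 1, k)`. The argument needs
only `q ≠ 0`, which holds since `0` is algebraic.

*Spanning.* Modulo the RTT relations, a descent `u y * u x` with `x < y` can be rewritten through
products whose first letter is smaller than `y` (`QMat.swap`). This replaces a word by
lexicographically smaller words of the same length, so the rewriting ends at ordered words
(`QMat.word_mem`).

*Independence.* The relations are realised by operators on a polynomial ring. A product of RTT
matrices with mutually commuting entries is an RTT matrix (`QMat.RTT.mul`), and so is the transpose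
of one. Bidiagonal matrices of q-Weyl operators (`QMat.bid_RTT`) and diagonal matrices of commuting
variables are RTT matrices. Hence so is `Lᵗ D U`, where `D` is diagonal and `L`, `U` are products of
`N` bidiagonal matrices, all factors using independent variables (`QMat.gen_RTT`).
This is a quantum version of the factorisation of a generic matrix.

For a suitable weight on monomials, each entry `(i, j)` of `Lᵗ D U` acts as multiplication by a single
monomial `hgen (i, j)` up to nonzero scalars and terms of lower weight (`QMat.gen_lead`). Leading
exponents add under products, so the word with letters in a multiset `s` sends the polynomial `1` to
a vector whose leading exponent is the sum of `hgen` over `s`. That sum determines `s`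
(`QMat.sum_hgen_injective`), so the images of distinct ordered words have distinct leading
exponents and are linearly independent (`QMat.vec_linearIndependent`).
-/

/-- The standard R-matrix `R̂` of `GL_q(N)` as a scalar `N² × N²` matrix:
the column indexed by `(a, b)` records the coefficients of `R̂(e_a ⊗ e_b)`
in the standard basis, so that `R̂(e_a ⊗ e_b) = q e_a ⊗ e_b` if `a = b`,
`R̂(e_a ⊗ e_b) = e_b ⊗ e_a` if `a < b`, and
`R̂(e_a ⊗ e_b) = e_b ⊗ e_a + (q - q⁻¹) e_a ⊗ e_b` if `a > b`. -/
noncomputable def Rhat (N : ℕ) (q : ℂ) : Matrix (Fin N × Fin N) (Fin N × Fin N) ℂ :=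
  fun out inp =>
    if inp.1 = inp.2 then (if out = inp then q else 0)
    else if inp.1 < inp.2 then (if out = (inp.2, inp.1) then 1 else 0)
    else (if out = (inp.2, inp.1) then 1 else 0) +
         (if out = inp then q - q⁻¹ else 0)

/-- The degree-`k` homogeneous component `V^{⊗k}` of the free algebra on the
generators: the span of all products of exactly `k` generators. -/
noncomputable def degComp (N k : ℕ) :
    Submodule ℂ (FreeAlgebra ℂ (Fin N × Fin N)) :=
  Submodule.span ℂ
    {x | ∃ l : List (Fin N × Fin N), l.length = k ∧
      x = (l.map (FreeAlgebra.ι ℂ)).prod}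

/-- The two-sided ideal generated by a set `S`, viewed as a `ℂ`-submodule. -/
noncomputable def twoSidedSpan (N : ℕ) (S : Set (FreeAlgebra ℂ (Fin N × Fin N))) :
    Submodule ℂ (FreeAlgebra ℂ (Fin N × Fin N)) :=
  Submodule.span ℂ {x | ∃ a b : FreeAlgebra ℂ (Fin N × Fin N), ∃ r ∈ S, x = a * r * b}

/-- The matrix `u₁ = u ⊗ I` over the free algebra, where `u` is the `N × N`
matrix of generators. -/
noncomputable def u1mat (N : ℕ) :
    Matrix (Fin N × Fin N) (Fin N × Fin N) (FreeAlgebra ℂ (Fin N × Fin N)) :=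
  fun out inp =>
    FreeAlgebra.ι ℂ (out.1, inp.1) * (if out.2 = inp.2 then 1 else 0)

/-- The matrix `u₂ = I ⊗ u` over the free algebra, where `u` is the `N × N`
matrix of generators. -/
noncomputable def u2mat (N : ℕ) :
    Matrix (Fin N × Fin N) (Fin N × Fin N) (FreeAlgebra ℂ (Fin N × Fin N)) :=
  fun out inp =>
    (if out.1 = inp.1 then 1 else 0) * FreeAlgebra.ι ℂ (out.2, inp.2)

namespace QMat

variable {N : ℕ} {q : ℂ}

/-! ### The RTT relations over an arbitrary algebra -/

section RTT
variable {E : Type*} [Ring E] [Algebra ℂ E]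

/-- The matrix `T₁ T₂`, where `T₁ = T ⊗ I` and `T₂ = I ⊗ T`. -/
def TT (T : Matrix (Fin N) (Fin N) E) : Matrix (Fin N × Fin N) (Fin N × Fin N) E :=
  fun p r => T p.1 r.1 * T p.2 r.2

/-- The matrix `T` satisfies the RTT relations `R̂ T₁ T₂ = T₁ T₂ R̂`. -/
def RTT (q : ℂ) (T : Matrix (Fin N) (Fin N) E) : Prop :=
  (Rhat N q).map (algebraMap ℂ E) * TT T = TT T * (Rhat N q).map (algebraMap ℂ E)

/-- Each row of `R̂` has at most two nonzero entries. -/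
theorem Rhat_apply (i j : Fin N) (s : Fin N × Fin N) :
    Rhat N q (i, j) s = (if (j, i) = s then (if i = j then q else 1) else 0) +
      (if (i, j) = s then (if j < i then q - q⁻¹ else 0) else 0) := by
  obtain ⟨a, b⟩ := s
  simp only [Rhat, Prod.mk.injEq]
  grind

theorem Rhat_symm (p r : Fin N × Fin N) : Rhat N q p r = Rhat N q r p := by
  obtain ⟨i, j⟩ := p
  obtain ⟨a, b⟩ := r
  simp only [Rhat_apply, Prod.mk.injEq]
  grind

theorem R_mul_apply (A : Matrix (Fin N × Fin N) (Fin N × Fin N) E) (i j : Fin N)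
    (r : Fin N × Fin N) :
    ((Rhat N q).map (algebraMap ℂ E) * A) (i, j) r =
      (if i = j then q else 1) • A (j, i) r + (if j < i then q - q⁻¹ else 0) • A (i, j) r := by
  simp only [Matrix.mul_apply, Matrix.map_apply, ← Algebra.smul_def, Rhat_apply, add_smul,
    ite_smul, zero_smul, Finset.sum_add_distrib, Finset.sum_ite_eq, Finset.mem_univ, if_true]

theorem mul_R_apply (A : Matrix (Fin N × Fin N) (Fin N × Fin N) E) (p : Fin N × Fin N)
    (k l : Fin N) :
    (A * (Rhat N q).map (algebraMap ℂ E)) p (k, l) =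
      (if k = l then q else 1) • A p (l, k) + (if l < k then q - q⁻¹ else 0) • A p (k, l) := by
  simp only [Matrix.mul_apply, Matrix.map_apply, ← Algebra.commutes, ← Algebra.smul_def,
    Rhat_symm _ (k, l)]
  simp only [Rhat_apply, add_smul,
    ite_smul, zero_smul, Finset.sum_add_distrib, Finset.sum_ite_eq, Finset.mem_univ, if_true]

/-- The RTT relations are stable under transposition because `R̂` is symmetric. -/
theorem RTT.transpose {T : Matrix (Fin N) (Fin N) E} (h : RTT q T) : RTT q T.transpose := by
  have h' : ∀ p r, _ := fun p r => congrFun (congrFun h p) r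
  unfold RTT
  ext ⟨i, j⟩ ⟨k, l⟩
  have := h' (k, l) (i, j)
  rw [R_mul_apply, mul_R_apply] at this ⊢
  exact this.symm

/-- The RTT relations written out entry by entry. -/
theorem RTT.entry {T : Matrix (Fin N) (Fin N) E} (h : RTT q T) (i j k l : Fin N) :
    (if i = j then q else 1) • (T j k * T i l) + (if j < i then q - q⁻¹ else 0) • (T i k * T j l) =
      (if k = l then q else 1) • (T i l * T j k) +
        (if l < k then q - q⁻¹ else 0) • (T i k * T j l) := by
  have := congrFun (congrFun h (i, j)) (k, l)
  rwa [R_mul_apply, mul_R_apply] at this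

/-- The coproduct of the quantum matrix bialgebra: the product of two RTT matrices whose entries
commute with each other is again an RTT matrix, since then `(AB)₁(AB)₂ = A₁A₂B₁B₂`. -/
theorem RTT.mul {A B : Matrix (Fin N) (Fin N) E} (hA : RTT q A) (hB : RTT q B)
    (hAB : ∀ i j k l, Commute (A i j) (B k l)) : RTT q (A * B) := by
  have key : TT (A * B) = TT A * TT B := by
    ext ⟨i, j⟩ ⟨k, l⟩
    simp only [TT, Matrix.mul_apply, Fintype.sum_prod_type, Finset.sum_mul_sum]
    refine Finset.sum_congr rfl fun s _ => Finset.sum_congr rfl fun t _ => ?_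
    rw [mul_assoc, ← mul_assoc (B s k), ← (hAB j t s k).eq]
    simp only [mul_assoc]
  unfold RTT at *
  rw [key, ← mul_assoc, hA, mul_assoc, hB, mul_assoc]

/-- The Manin relations on the entries of `T` (rows `h1`, columns `h2`, the two diagonals of a
`2 × 2` minor `h3`, `h4`) imply the RTT relations. -/
theorem RTT.of_rel (hq : q ≠ 0) {T : Matrix (Fin N) (Fin N) E}
    (h1 : ∀ i k l, k < l → T i l * T i k = q • (T i k * T i l))
    (h2 : ∀ i j k, i < j → T j k * T i k = q • (T i k * T j k))
    (h3 : ∀ i j k l, i < j → k < l → T j k * T i l = T i l * T j k)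
    (h4 : ∀ i j k l, i < j → k < l →
      T j l * T i k = T i k * T j l + (q - q⁻¹) • (T i l * T j k)) : RTT q T := by
  unfold RTT
  ext ⟨i, j⟩ ⟨k, l⟩
  rw [R_mul_apply, mul_R_apply]
  simp only [TT]
  have hqi : q * q⁻¹ = 1 := mul_inv_cancel₀ hq
  rcases lt_trichotomy i j with hij | rfl | hij <;> rcases lt_trichotomy k l with hkl | rfl | hkl
  · simp [hij.ne, hkl.ne, hij.not_gt, hkl.not_gt, h3 i j k l hij hkl]
  · simp [hij.ne, hij.not_gt, h2 i j k hij]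
  · simp [hij.ne, hkl.ne', hij.not_gt, hkl, h4 i j l k hij hkl]
  · simp [hkl.ne, hkl.not_gt, h1 i k l hkl]
  · simp
  · simp only [hkl.ne', hkl, h1 i l k hkl, if_true, if_false, lt_irrefl]
    match_scalars
    linear_combination hqi
  · simp only [hkl.ne, hij, hij.ne', hkl.not_gt, h4 j i k l hij hkl, h3 j i k l hij hkl, if_true,
      if_false]
    module
  · simp only [hij.ne', hij, h2 j i k hij, if_true, if_false, lt_irrefl]
    match_scalars
    linear_combination -hqi
  · simp only [hij.ne', hkl.ne', hij, hkl, h3 j i l k hij hkl, if_true, if_false]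
end RTT

/-! ### q-Weyl operators and elementary bidiagonal matrices -/

section Ops

/-- Exponents of monomials in commuting variables indexed by `ℕ × ℕ × ℕ`. -/
abbrev Expo := (ℕ × ℕ × ℕ) →₀ ℕ

/-- The Fock space: polynomials in the variables indexed by `ℕ × ℕ × ℕ`, with the monomial of
exponent `g` encoded as `single g 1`. -/
abbrev Fock := Expo →₀ ℂ

open Finsupp

/-- The q-Weyl operator `x^g ↦ q^{χ(g)} x^{g+h}`: a q-dilation along the character `χ` followed by
multiplication by the monomial `x^h`. -/
noncomputable def W (q : ℂ) (χ : Expo →+ ℤ) (h : Expo) : Module.End ℂ Fock :=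
  Finsupp.linearCombination ℂ fun g => q ^ χ g • single (g + h) (1 : ℂ)

theorem W_single (χ : Expo →+ ℤ) (h g : Expo) :
    W q χ h (single g 1) = q ^ χ g • single (g + h) (1 : ℂ) := by
  simp [W]

theorem W_comm (hq : q ≠ 0) (χ χ' : Expo →+ ℤ) (h h' : Expo) :
    W q χ h * W q χ' h' = q ^ (χ h' - χ' h) • (W q χ' h' * W q χ h) := by
  refine Finsupp.lhom_ext' fun g => LinearMap.ext_ring ?_
  simp only [LinearMap.comp_apply, lsingle_apply, Module.End.mul_apply, LinearMap.smul_apply,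
    W_single, map_smul, smul_smul, map_add, ← zpow_add₀ hq, add_right_comm g h' h]
  congr 2
  ring

/-- The exponent of the variable `s`, as a character of the exponent monoid. -/
noncomputable def cf (s : ℕ × ℕ × ℕ) : Expo →+ ℤ :=
  (Nat.castAddMonoidHom ℤ).comp (Finsupp.applyAddHom s)

theorem cf_single (s t : ℕ × ℕ × ℕ) : cf s (single t 1) = if t = s then 1 else 0 := by
  simp [cf, Finsupp.single_apply]

/-- The bidiagonal matrix attached to a sequence of variables `x`: the diagonal entry `(i, i)` is the
q-dilation in `x i` divided by the q-dilation in `x (i + 1)`, and the entry `(i, i + 1)` is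
multiplication by `x (i + 1)`. -/
noncomputable def bid (q : ℂ) (N : ℕ) (x : ℕ → ℕ × ℕ × ℕ) :
    Matrix (Fin N) (Fin N) (Module.End ℂ Fock) := fun i j =>
  if j = i then W q (cf (x i) - cf (x (i + 1))) 0
  else if (j : ℕ) = i + 1 then W q 0 (single (x j) 1) else 0

theorem bid_diag (x : ℕ → ℕ × ℕ × ℕ) (i : Fin N) :
    bid q N x i i = W q (cf (x i) - cf (x (i + 1))) 0 := by simp [bid]

theorem bid_super (x : ℕ → ℕ × ℕ × ℕ) {i j : Fin N} (h : (j : ℕ) = i + 1) :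
    bid q N x i j = W q 0 (single (x j) 1) := by
  have : j ≠ i := by rintro rfl; omega
  simp [bid, h, this]

theorem bid_zero (x : ℕ → ℕ × ℕ × ℕ) {i j : Fin N} (h : (j : ℕ) ≠ i) (h' : (j : ℕ) ≠ i + 1) :
    bid q N x i j = 0 := by
  have : j ≠ i := by rintro rfl; omega
  simp [bid, h', this]

/-- Bidiagonal matrices satisfy the Manin relations: neighbouring nonzero entries `q`-commute, all
others commute, and in a `2 × 2` minor one of the two off-diagonal entries vanishes (`cross`), so
that no correction term `q - q⁻¹` appears. -/
theorem bid_RTT (hq : q ≠ 0) {x : ℕ → ℕ × ℕ × ℕ} (hx : Function.Injective x) :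
    RTT q (bid q N x) := by
  have cross : ∀ i j k l : Fin N, i < j → k < l →
      bid q N x i l = 0 ∨ bid q N x j k = 0 := by
    intro i j k l hij hkl
    rw [Fin.lt_def] at hij hkl
    by_cases h : (l : ℕ) ≤ i + 1
    · exact Or.inr (bid_zero x (by omega) (by omega))
    · exact Or.inl (bid_zero x (by omega) (by omega))
  have comm : ∀ i j k l : Fin N, i < j → k < l →
      bid q N x j l * bid q N x i k = bid q N x i k * bid q N x j l := by
    intro i j k l hij hkl
    rw [Fin.lt_def] at hij hkl
    by_cases h1 : (k : ℕ) = i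
    · obtain rfl := Fin.ext h1
      by_cases h2 : (l : ℕ) = j
      · obtain rfl := Fin.ext h2
        rw [bid_diag, bid_diag, W_comm hq]
        simp
      by_cases h3 : (l : ℕ) = j + 1
      · rw [bid_diag, bid_super x h3, W_comm hq]
        simp [cf_single, hx.eq_iff, show (l : ℕ) ≠ k by omega, show (l : ℕ) ≠ k + 1 by omega]
      · simp [bid_zero x h2 h3]
    by_cases h1' : (k : ℕ) = i + 1
    · by_cases h2 : (l : ℕ) = j
      · obtain rfl := Fin.ext h2
        rw [bid_diag, bid_super x h1', W_comm hq]
        simp [cf_single, hx.eq_iff, show (k : ℕ) ≠ l by omega, show (k : ℕ) ≠ l + 1 by omega]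
      by_cases h3 : (l : ℕ) = j + 1
      · rw [bid_super x h1', bid_super x h3, W_comm hq]
        simp
      · simp [bid_zero x h2 h3]
    · simp [bid_zero x h1 h1']
  apply RTT.of_rel hq
  · intro i k l hkl
    rw [Fin.lt_def] at hkl
    by_cases h1 : (k : ℕ) = i ∧ (l : ℕ) = i + 1
    · obtain ⟨h1, h3⟩ := h1
      obtain rfl := Fin.ext h1
      rw [bid_diag, bid_super x h3, W_comm hq]
      simp [cf_single, hx.eq_iff, h3]
    · rcases not_and_or.1 h1 with h1 | h1
      · by_cases h2 : (k : ℕ) = i + 1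
        · simp [bid_zero x (i := i) (j := l) (by omega) (by omega)]
        · simp [bid_zero x h1 h2]
      · by_cases h2 : (l : ℕ) = i
        · simp [bid_zero x (i := i) (j := k) (by omega) (by omega)]
        · simp [bid_zero x h2 h1]
  · intro i j k hij
    rw [Fin.lt_def] at hij
    by_cases h1 : (k : ℕ) = j ∧ (k : ℕ) = i + 1
    · obtain ⟨h1, h3⟩ := h1
      obtain rfl := Fin.ext h1
      rw [bid_diag, bid_super x h3, W_comm hq]
      simp [cf_single, hx.eq_iff]
    · rcases not_and_or.1 h1 with h1 | h1
      · by_cases h2 : (k : ℕ) = j + 1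
        · simp [bid_zero x (i := i) (j := k) (by omega) (by omega)]
        · simp [bid_zero x h1 h2]
      · by_cases h2 : (k : ℕ) = i
        · simp [bid_zero x (i := j) (j := k) (by omega) (by omega)]
        · simp [bid_zero x h2 h1]
  · intro i j k l hij hkl
    have := cross i j k l hij hkl
    grind
  · intro i j k l hij hkl
    rw [comm i j k l hij hkl]
    rcases cross i j k l hij hkl with h | h <;> simp [h]

/-! ### Leading terms -/

/-- The span of the monomials of weight at most `n`. -/
def Low (w : Expo →+ ℤ) (n : ℤ) : Submodule ℂ Fock := Finsupp.supported ℂ ℂ {g | w g ≤ n}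

/-- The operator `X` raises the weight by at most `n`. -/
def IsLE (w : Expo →+ ℤ) (n : ℤ) (X : Module.End ℂ Fock) : Prop :=
  ∀ m, ∀ v ∈ Low w m, X v ∈ Low w (m + n)

/-- The operator `X` multiplies every monomial by the monomial of exponent `h`, up to a nonzero
scalar that may depend on the monomial and up to terms of smaller weight. -/
def IsLead (w : Expo →+ ℤ) (h : Expo) (X : Module.End ℂ Fock) : Prop :=
  ∀ g, ∃ c : ℂ, c ≠ 0 ∧ X (single g 1) - c • single (g + h) 1 ∈ Low w (w g + w h - 1)

theorem single_mem_Low (w : Expo →+ ℤ) {n : ℤ} {g : Expo} (h : w g ≤ n) (c : ℂ) :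
    single g c ∈ Low w n := Finsupp.single_mem_supported ℂ c h

theorem Low_mono (w : Expo →+ ℤ) {m n : ℤ} (h : m ≤ n) : Low w m ≤ Low w n :=
  Finsupp.supported_mono fun _ hg => le_trans hg h

theorem isLE_of_single {w : Expo →+ ℤ} {n : ℤ} {X : Module.End ℂ Fock}
    (h : ∀ g, X (single g 1) ∈ Low w (w g + n)) : IsLE w n X := by
  intro m v hv
  rw [Low, Finsupp.supported_eq_span_single] at hv
  induction hv using Submodule.span_induction with
  | mem x hx =>
    obtain ⟨g, hg, rfl⟩ := hx
    exact Low_mono w (by simpa using hg) (h g)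
  | zero => simp
  | add x y _ _ hx hy => rw [map_add]; exact add_mem hx hy
  | smul a x _ hx => rw [map_smul]; exact Submodule.smul_mem _ _ hx

theorem IsLE.zero (w : Expo →+ ℤ) (n : ℤ) : IsLE w n 0 := fun _ _ _ => by simp

theorem IsLE.mono {w : Expo →+ ℤ} {m n : ℤ} {X : Module.End ℂ Fock} (hX : IsLE w m X)
    (h : m ≤ n) : IsLE w n X :=
  fun k v hv => Low_mono w (by omega) (hX k v hv)

theorem IsLE.mul {w : Expo →+ ℤ} {m n : ℤ} {X Y : Module.End ℂ Fock} (hX : IsLE w m X)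
    (hY : IsLE w n Y) : IsLE w (m + n) (X * Y) := fun k v hv => by
  have := hX _ _ (hY k v hv)
  rwa [add_assoc, add_comm n] at this

theorem IsLE.sum {ι : Type*} {w : Expo →+ ℤ} {n : ℤ} {s : Finset ι} {X : ι → Module.End ℂ Fock}
    (h : ∀ i ∈ s, IsLE w n (X i)) : IsLE w n (∑ i ∈ s, X i) := fun k v hv => by
  rw [LinearMap.sum_apply]
  exact Submodule.sum_mem _ fun i hi => h i hi k v hv

theorem IsLead.isLE {w : Expo →+ ℤ} {h : Expo} {X : Module.End ℂ Fock} (hX : IsLead w h X) :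
    IsLE w (w h) X := by
  refine isLE_of_single fun g => ?_
  obtain ⟨c, -, hc⟩ := hX g
  have := add_mem (Low_mono w (by omega) hc)
    (Submodule.smul_mem (Low w (w g + w h)) c (single_mem_Low w (g := g + h) (by simp) 1))
  rwa [sub_add_cancel] at this

theorem IsLead.mul {w : Expo →+ ℤ} {h h' : Expo} {X Y : Module.End ℂ Fock} (hX : IsLead w h X)
    (hY : IsLead w h' Y) : IsLead w (h + h') (X * Y) := by
  intro g
  obtain ⟨d, hd, hd'⟩ := hY g
  obtain ⟨c, hc, hc'⟩ := hX (g + h')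
  refine ⟨d * c, mul_ne_zero hd hc, ?_⟩
  have h1 := Low_mono w (n := w g + w (h + h') - 1) (by simp only [map_add]; omega) (hX.isLE _ _ hd')
  have h2 := Submodule.smul_mem _ d
    (Low_mono w (n := w g + w (h + h') - 1) (by simp only [map_add]; omega) hc')
  have := add_mem h1 h2
  simp only [Module.End.mul_apply, map_sub, map_smul, smul_sub, smul_smul] at this ⊢
  rwa [sub_add_sub_cancel, add_assoc, add_comm h'] at this

theorem IsLead.add {w : Expo →+ ℤ} {h : Expo} {X Y : Module.End ℂ Fock} (hX : IsLead w h X)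
    (hY : IsLE w (w h - 1) Y) : IsLead w h (X + Y) := by
  intro g
  obtain ⟨c, hc, hc'⟩ := hX g
  refine ⟨c, hc, ?_⟩
  have := add_mem hc' (Low_mono w (n := w g + w h - 1) (by omega)
    (hY (w g) _ (single_mem_Low w le_rfl 1)))
  rw [LinearMap.add_apply]
  convert this using 1
  abel

theorem isLead_one (w : Expo →+ ℤ) : IsLead w 0 1 := fun g =>
  ⟨1, one_ne_zero, by simp⟩

theorem isLead_W (hq : q ≠ 0) (w : Expo →+ ℤ) (χ : Expo →+ ℤ) (h : Expo) :
    IsLead w h (W q χ h) := fun g =>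
  ⟨q ^ χ g, zpow_ne_zero _ hq, by simp [W_single]⟩

theorem isLead_list_prod {α : Type*} {w : Expo →+ ℤ} {h : α → Expo} {X : α → Module.End ℂ Fock}
    (hX : ∀ a, IsLead w (h a) (X a)) (l : List α) :
    IsLead w (l.map h).sum (l.map X).prod := by
  induction l with
  | nil => simpa using isLead_one w
  | cons a l ih => simpa using (hX a).mul ih

/-- Vectors with pairwise distinct leading exponents are linearly independent: in a vanishing
combination, look at the coefficient of a leading exponent of maximal weight. -/
theorem linearIndependent_of_lead {ι : Type*} {w : Expo →+ ℤ} {H : ι → Expo}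
    (hH : Function.Injective H) {v : ι → Fock}
    (hv : ∀ i, ∃ c : ℂ, c ≠ 0 ∧ v i - c • single (H i) 1 ∈ Low w (w (H i) - 1)) :
    LinearIndependent ℂ v := by
  choose c hc hv using hv
  have low : ∀ i g, w (H i) ≤ w g → v i g = if H i = g then c i else 0 := by
    intro i g hg
    have h0 : (v i - c i • single (H i) 1 : Expo →₀ ℂ) g = 0 := by
      by_contra hne
      have := (Finsupp.mem_supported ℂ _).1 (hv i) (Finsupp.mem_support_iff.2 hne)
      simp only [Set.mem_ofPred_eq] at this
      omega
    simpa [sub_eq_zero, Finsupp.single_apply] using h0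
  rw [linearIndependent_iff']
  intro s a hs
  by_contra! hne
  obtain ⟨i0, hi0, ha0⟩ := hne
  classical
  obtain ⟨i, hi, hmax⟩ := (s.filter fun i => a i ≠ 0).exists_max_image (fun i => w (H i))
    ⟨i0, by simp [hi0, ha0]⟩
  rw [Finset.mem_filter] at hi
  have := DFunLike.congr_fun hs (H i)
  rw [Finsupp.finsetSum_apply, Finset.sum_eq_single i] at this
  · simp [low i (H i) le_rfl, hc i, hi.2] at this
  · intro j hj hji
    by_cases haj : a j = 0
    · simp [haj]
    · simp [low j (H i) (hmax j (by simp [hj, haj])), hH.eq_iff, hji]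
  · intro h; exact absurd hi.1 h

/-! ### Triangular quantum matrices -/

/-- The product of `m` bidiagonal matrices `bid (x (m - 1)) ⋯ bid (x 0)` in independent sets of
variables; an upper triangular quantum matrix. -/
noncomputable def tri (q : ℂ) (N : ℕ) (x : ℕ → ℕ → ℕ × ℕ × ℕ) :
    ℕ → Matrix (Fin N) (Fin N) (Module.End ℂ Fock)
  | 0 => 1
  | m + 1 => bid q N (x m) * tri q N x m

theorem bid_commute (hq : q ≠ 0) {x y : ℕ → ℕ × ℕ × ℕ} (hxy : ∀ i j, x i ≠ y j)
    (i j k l : Fin N) : Commute (bid q N x i j) (bid q N y k l) := by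
  unfold bid
  split_ifs <;> first | exact Commute.zero_left _ | exact Commute.zero_right _ | skip
  all_goals
    unfold Commute SemiconjBy
    rw [W_comm hq]
    simp [cf_single, hxy, (hxy _ _).symm]

theorem commute_tri {X : Module.End ℂ Fock} {x : ℕ → ℕ → ℕ × ℕ × ℕ} (m : ℕ)
    (h : ∀ n < m, ∀ i j : Fin N, Commute X (bid q N (x n) i j)) (i j : Fin N) :
    Commute X (tri q N x m i j) := by
  induction m generalizing i j with
  | zero =>
    rw [tri, Matrix.one_apply]
    split_ifs <;> simp
  | succ m ih =>
    rw [tri, Matrix.mul_apply]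
    exact Commute.sum_right _ _ _ fun s _ => (h m (by omega) _ _).mul_right
      (ih (fun n hn => h n (by omega)) _ _)

theorem one_RTT : RTT q (1 : Matrix (Fin N) (Fin N) (Module.End ℂ Fock)) := by
  have : TT (1 : Matrix (Fin N) (Fin N) (Module.End ℂ Fock)) = 1 := by
    ext1 ⟨i, j⟩ ⟨k, l⟩
    simp only [TT, Matrix.one_apply, Prod.mk.injEq]
    split_ifs <;> simp_all
  rw [RTT, this, mul_one, one_mul]

theorem tri_RTT (hq : q ≠ 0) {x : ℕ → ℕ → ℕ × ℕ × ℕ}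
    (hx : ∀ m i m' i', x m i = x m' i' → m = m' ∧ i = i') (m : ℕ) : RTT q (tri q N x m) := by
  induction m with
  | zero => exact one_RTT
  | succ m ih =>
    refine (bid_RTT hq fun i i' h => (hx _ _ _ _ h).2).mul ih fun i j k l => commute_tri m ?_ k l
    intro n hn k' l'
    exact bid_commute hq (fun a b h => by have := (hx _ _ _ _ h).1; omega) _ _ _ _

/-- The leading exponent of the entry `(i, i + d)` of the product `tri x m`. This entry is a sum over
paths from `i` to `i + d` that rise by at most one at each of the `m` factors; the leading one rises
at the first `d` factors, `x (m - 1), …, x (m - d)`. -/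
noncomputable def path (x : ℕ → ℕ → ℕ × ℕ × ℕ) : ℕ → ℕ → ℕ → Expo
  | 0, _, _ => 0
  | _ + 1, _, 0 => 0
  | m + 1, i, d + 1 => single (x m (i + 1)) 1 + path x m (i + 1) d

/-- The variable `x m i` has weight `2m + 2`, so earlier factors weigh more. -/
theorem w_path {w : Expo →+ ℤ} {x : ℕ → ℕ → ℕ × ℕ × ℕ}
    (hw : ∀ m i, w (single (x m i) 1) = 2 * m + 2) (m i d : ℕ) (hd : d ≤ m) :
    w (path x m i d) = d * (2 * m + 1 - d) := by
  induction m generalizing i d with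
  | zero => obtain rfl : d = 0 := by omega
            simp [path]
  | succ m ih =>
    cases d with
    | zero => simp [path]
    | succ d =>
      rw [path, map_add, hw, ih _ _ (by omega)]
      push_cast
      ring

theorem bid_mul_apply (x : ℕ → ℕ × ℕ × ℕ) (A : Matrix (Fin N) (Fin N) (Module.End ℂ Fock))
    (i j : Fin N) :
    (bid q N x * A) i j = bid q N x i i * A i j +
      if h : (i : ℕ) + 1 < N then bid q N x i ⟨i + 1, h⟩ * A ⟨i + 1, h⟩ j else 0 := by
  rw [Matrix.mul_apply, ← Finset.add_sum_erase _ _ (Finset.mem_univ i)]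
  congr 1
  split_ifs with h
  · rw [Finset.sum_eq_single ⟨i + 1, h⟩]
    · intro s hs hs'
      rw [bid_zero, zero_mul]
      · exact fun h => (Finset.ne_of_mem_erase hs) (Fin.ext h)
      · exact fun h => hs' (Fin.ext h)
    · intro hn
      exact absurd (Finset.mem_erase.2 ⟨fun h' => by simpa using congrArg Fin.val h',
        Finset.mem_univ _⟩) hn
  · refine Finset.sum_eq_zero fun s hs => ?_
    rw [bid_zero, zero_mul]
    · exact fun h => (Finset.ne_of_mem_erase hs) (Fin.ext h)
    · omega

theorem tri_zero (x : ℕ → ℕ → ℕ × ℕ × ℕ) (m : ℕ) (i j : Fin N)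
    (h : (j : ℕ) < i ∨ (i : ℕ) + m < j) : tri q N x m i j = 0 := by
  induction m generalizing i j with
  | zero => rw [tri, Matrix.one_apply_ne]; rintro rfl; omega
  | succ m ih =>
    rw [tri, bid_mul_apply, ih i j (by omega)]
    split_ifs with h'
    · rw [ih ⟨i + 1, h'⟩ j (by simp only; omega)]; simp
    · simp

/-- The entry `(i, i + d)` has leading exponent `path x m i d`. In the recursion along the leftmost
factor, rising at once beats staying, because `(d + 1)(2m - d) < (2m + 2) + d(2m + 1 - d)`. -/
theorem tri_lead (hq : q ≠ 0) {w : Expo →+ ℤ} {x : ℕ → ℕ → ℕ × ℕ × ℕ}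
    (hw : ∀ m i, w (single (x m i) 1) = 2 * m + 2) (m d : ℕ) (hd : d ≤ m) (i j : Fin N)
    (hij : (j : ℕ) = i + d) : IsLead w (path x m i d) (tri q N x m i j) := by
  induction m generalizing i d with
  | zero =>
    obtain rfl : d = 0 := by omega
    obtain rfl : j = i := Fin.ext hij
    simpa [tri, path] using isLead_one w
  | succ m ih =>
    have hdiag : IsLead w 0 (bid q N (x m) i i) := by
      rw [bid_diag]; exact isLead_W hq _ _ _
    rw [tri, bid_mul_apply]
    cases d with
    | zero =>
      obtain rfl : j = i := Fin.ext hij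
      have h1 := hdiag.mul (ih 0 (Nat.zero_le _) j rfl)
      have h2 : path x m j 0 = 0 := by cases m <;> rfl
      rw [h2, add_zero] at h1
      rw [path]
      split_ifs with h
      · rw [tri_zero x m ⟨j + 1, h⟩ j (by simp), mul_zero, add_zero]; exact h1
      · rw [add_zero]; exact h1
    | succ d =>
      have h : (i : ℕ) + 1 < N := by have := j.2; omega
      rw [dif_pos h, add_comm (bid q N (x m) i i * _),
        bid_super (i := i) (j := ⟨i + 1, h⟩) _ rfl, path]
      refine ((isLead_W hq _ _ _).mul (ih d (by omega) ⟨i + 1, h⟩ (by simp only; omega))).add ?_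
      by_cases hdm : d + 1 ≤ m
      · refine (hdiag.isLE.mul (ih (d + 1) hdm i hij).isLE).mono ?_
        rw [map_add, hw, w_path hw _ _ _ hdm, w_path hw _ _ _ (by omega)]
        push_cast
        simp only [map_zero]
        nlinarith
      · rw [tri_zero x m i j (by omega), mul_zero]
        exact IsLE.zero _ _

/-! ### The representation -/

theorem diag_RTT (hq : q ≠ 0) (z : Fin N → Expo) :
    RTT q (Matrix.diagonal fun s => W q 0 (z s)) := by
  have comm : ∀ s t, W q 0 (z s) * W q 0 (z t) = W q 0 (z t) * W q 0 (z s) := by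
    intro s t; rw [W_comm hq]; simp
  apply RTT.of_rel hq
  · intro i k l hkl
    rcases eq_or_ne i k with rfl | h
    · simp [Matrix.diagonal_apply_ne _ hkl.ne]
    · simp [Matrix.diagonal_apply_ne _ h]
  · intro i j k hij
    rcases eq_or_ne i k with rfl | h
    · simp [Matrix.diagonal_apply_ne _ hij.ne']
    · simp [Matrix.diagonal_apply_ne _ h]
  · intro i j k l hij hkl
    simp only [Matrix.diagonal_apply]
    split_ifs <;> first | (exfalso; omega) | simp
  · intro i j k l hij hkl
    simp only [Matrix.diagonal_apply]
    split_ifs <;> first | (exfalso; omega) | simp [comm]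

/-- The variable with index `(m, i)` in the family `c`: families `0` and `1` serve the lower and upper
triangular factors, and family `2` the diagonal one. -/
def vx (c m i : ℕ) : ℕ × ℕ × ℕ := (c, m, i)

/-- The quantum matrix `Lᵗ D U` of operators on the Fock space, with `L` and `U` triangular quantum
matrices and `D` a diagonal matrix of commuting variables. -/
noncomputable def gen (q : ℂ) (N : ℕ) : Matrix (Fin N) (Fin N) (Module.End ℂ Fock) :=
  (tri q N (vx 0) N).transpose *
    Matrix.diagonal (fun s : Fin N => W q 0 (single (vx 2 0 s) 1)) * tri q N (vx 1) N

theorem gen_apply (i j : Fin N) : gen q N i j =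
    ∑ s, tri q N (vx 0) N s i * W q 0 (single (vx 2 0 s) 1) * tri q N (vx 1) N s j := by
  rw [gen, Matrix.mul_apply]
  simp only [Matrix.mul_diagonal, Matrix.transpose_apply]

theorem gen_RTT (hq : q ≠ 0) : RTT q (gen q N) := by
  have inj : ∀ c m i m' i', vx c m i = vx c m' i' → m = m' ∧ i = i' := by
    intro c m i m' i' h; simpa [vx] using h
  have cz : ∀ (c : ℕ) (hc : c ≠ 2) (s k l : Fin N),
      Commute (W q 0 (single (vx 2 0 s) 1)) (tri q N (vx c) N k l) := by
    intro c hc s k l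
    refine commute_tri N (fun n _ i j => ?_) k l
    unfold bid
    split_ifs <;> first | exact Commute.zero_right _ | skip
    all_goals
      unfold Commute SemiconjBy
      rw [W_comm hq]
      simp [cf_single, vx, hc.symm]
  have ct : ∀ i j k l : Fin N, Commute (tri q N (vx 0) N i j) (tri q N (vx 1) N k l) := by
    intro i j k l
    refine commute_tri N (fun n _ a b => (commute_tri N (fun n' _ a' b' => ?_) i j).symm) k l
    exact bid_commute hq (fun _ _ => by simp [vx]) _ _ _ _
  refine RTT.mul (RTT.mul (tri_RTT hq (inj 0) N).transpose (diag_RTT hq _) ?_)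
    (tri_RTT hq (inj 1) N) ?_
  · intro i j k l
    rw [Matrix.diagonal_apply]
    split_ifs
    · exact (cz 0 (by simp) _ _ _).symm
    · exact Commute.zero_right _
  · intro i j k l
    rw [Matrix.mul_diagonal]
    exact (ct _ _ _ _).mul_left (cz 1 (by simp) _ _ _)

/-- The weight of exponents: `2m + 2` for the variable `(m, i)` of either triangular family, and
`(4N + 1) i` for the `i`-th diagonal variable. The factor `4N + 1` makes a larger diagonal index
outweigh the longer paths that a smaller one allows in the triangular factors. -/
noncomputable def wt (N : ℕ) : Expo →+ ℤ :=
  Finsupp.weight (R := ℕ) (fun s : ℕ × ℕ × ℕ =>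
    if s.1 = 2 then (4 * N + 1) * (s.2.2 : ℤ) else 2 * s.2.1 + 2)

theorem wt_vx {c : ℕ} (hc : c ≠ 2) (m i : ℕ) : wt N (single (vx c m i) 1) = 2 * m + 2 := by
  simp [wt, Finsupp.weight_single, vx, hc]

theorem wt_vx_two (m i : ℕ) : wt N (single (vx 2 m i) 1) = (4 * N + 1) * i := by
  simp [wt, Finsupp.weight_single, vx]

/-- The leading exponent of the summand `s` of the entry `(i, j)` of `Lᵗ D U`. -/
noncomputable def pathSum (N i j s : ℕ) : Expo :=
  path (vx 0) N s (i - s) + single (vx 2 0 s) 1 + path (vx 1) N s (j - s)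

/-- The leading exponent of the entry `p` of `Lᵗ D U`, attained by the summand `s = min i j`. -/
noncomputable def hgen (p : Fin N × Fin N) : Expo := pathSum N p.1 p.2 (min p.1 p.2 : Fin N)

theorem summand_lead (hq : q ≠ 0) (i j s : Fin N) (hi : s ≤ i) (hj : s ≤ j) :
    IsLead (wt N) (pathSum N i j s)
      (tri q N (vx 0) N s i * W q 0 (single (vx 2 0 s) 1) * tri q N (vx 1) N s j) := by
  rw [Fin.le_def] at hi hj
  exact ((tri_lead hq (wt_vx (by simp)) N _ (by omega) s i (by omega)).mul
    (isLead_W hq _ _ _)).mul (tri_lead hq (wt_vx (by simp)) N _ (by omega) s j (by omega))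

theorem wt_pathSum (i j s : ℕ) (hi : s ≤ i) (hj : s ≤ j) (hiN : i < N) (hjN : j < N) :
    wt N (pathSum N i j s) = ((i : ℤ) - s) * (2 * N + 1 - (i - s)) + (4 * N + 1) * s +
      ((j : ℤ) - s) * (2 * N + 1 - (j - s)) := by
  rw [pathSum, map_add, map_add, w_path (wt_vx (by simp)) _ _ _ (by omega),
    w_path (wt_vx (by simp)) _ _ _ (by omega), wt_vx_two]
  push_cast [Nat.cast_sub hi, Nat.cast_sub hj]
  ring

/-- Among the summands of the entry `(i, j)`, those with `s > min i j` vanish by triangularity and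
those with `s < min i j` have strictly smaller weight. -/
theorem gen_lead (hq : q ≠ 0) (p : Fin N × Fin N) :
    IsLead (wt N) (hgen p) (gen q N p.1 p.2) := by
  obtain ⟨i, j⟩ := p
  rw [gen_apply, ← Finset.add_sum_erase _ _ (Finset.mem_univ (min i j))]
  refine (summand_lead hq i j _ (min_le_left _ _) (min_le_right _ _)).add (IsLE.sum fun s hs => ?_)
  rcases lt_or_gt_of_ne (Finset.ne_of_mem_erase hs) with h | h
  · obtain ⟨h1, h2⟩ := lt_min_iff.1 h
    refine (summand_lead hq i j s h1.le h2.le).isLE.mono ?_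
    set t := min i j with ht
    have h3 : t ≤ i := min_le_left _ _
    have h4 : t ≤ j := min_le_right _ _
    rw [Fin.le_def] at h3 h4
    rw [Fin.lt_def] at h h1 h2
    rw [wt_pathSum _ _ _ h1.le h2.le i.2 j.2, wt_pathSum _ _ _ h3 h4 i.2 j.2]
    obtain ⟨e, he⟩ := Nat.exists_eq_add_of_lt h
    obtain ⟨a, ha⟩ := Nat.exists_eq_add_of_le h3
    obtain ⟨b, hb⟩ := Nat.exists_eq_add_of_le h4
    rw [ha, hb, he]
    push_cast
    nlinarith [mul_nonneg (Int.natCast_nonneg e) (Int.natCast_nonneg a),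
      mul_nonneg (Int.natCast_nonneg e) (Int.natCast_nonneg b),
      mul_nonneg (Int.natCast_nonneg e) (Int.natCast_nonneg e)]
  · have : i < s ∨ j < s := by simpa using h
    rcases this with h | h
    · rw [tri_zero (vx 0) N s i (Or.inl h)]; simpa using IsLE.zero _ _
    · rw [tri_zero (vx 1) N s j (Or.inl h)]; simpa using IsLE.zero _ _

/-! ### Leading exponents determine the word -/

/-- The exponent `path` is squarefree; this lists the variables that occur. -/
theorem path_apply (c c' n k m i d : ℕ) : path (vx c) m i d (vx c' n k) =
    if c = c' ∧ n < m ∧ n + k = m + i ∧ m ≤ n + d then 1 else 0 := by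
  induction m generalizing i d with
  | zero => simp [path]
  | succ m ih =>
    cases d with
    | zero => rw [path, if_neg (by omega)]; rfl
    | succ d =>
      rw [path, Finsupp.add_apply, ih, Finsupp.single_apply]
      simp only [vx, Prod.mk.injEq]
      split_ifs <;> first | rfl | (exfalso; omega)

/-- The coordinates `(N - (b - a), b)` of family `1` see whether the leading path of the upper
triangular factor starts at `a` and reaches `b`. -/
theorem hgen_apply_one (p : Fin N × Fin N) (a b : ℕ) (hab : a < b) (hb : b ≤ N) :
    hgen p (vx 1 (N - (b - a)) b) = if (p.1 : ℕ) = a ∧ b ≤ p.2 then 1 else 0 := by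
  obtain ⟨i, j⟩ := p
  simp only [hgen, pathSum, Finsupp.add_apply, path_apply, Fin.coe_min]
  simp only [Finsupp.single_apply, vx, Prod.mk.injEq, true_and]
  split_ifs <;> first | rfl | (exfalso; omega) | tauto

/-- The counterpart of `hgen_apply_one` for the lower triangular factor. -/
theorem hgen_apply_zero (p : Fin N × Fin N) (a b : ℕ) (hab : a < b) (hb : b ≤ N) :
    hgen p (vx 0 (N - (b - a)) b) = if (p.2 : ℕ) = a ∧ b ≤ p.1 then 1 else 0 := by
  obtain ⟨i, j⟩ := p
  simp only [hgen, pathSum, Finsupp.add_apply, path_apply, Fin.coe_min]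
  simp only [Finsupp.single_apply, vx, Prod.mk.injEq, true_and]
  split_ifs <;> first | rfl | (exfalso; omega) | tauto

theorem hgen_apply_two (p : Fin N × Fin N) (a : ℕ) :
    hgen p (vx 2 0 a) = if min (p.1 : ℕ) p.2 = a then 1 else 0 := by
  obtain ⟨i, j⟩ := p
  simp only [hgen, pathSum, Finsupp.add_apply, path_apply, Fin.coe_min]
  simp [Finsupp.single_apply, vx]

theorem sum_hgen_apply (s : Multiset (Fin N × Fin N)) (e : ℕ × ℕ × ℕ)
    (P : Fin N × Fin N → Prop) [DecidablePred P] (h : ∀ p, hgen p e = if P p then 1 else 0) :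
    (s.map hgen).sum e = s.countP P := by
  induction s using Multiset.induction with
  | empty => simp
  | cons p s ih => rw [Multiset.map_cons, Multiset.sum_cons, Finsupp.add_apply, ih, h,
      Multiset.countP_cons, add_comm]

/-- A multiset of letters is determined by the sum of their leading exponents: its coordinates give
the number of letters `(a, j)` with `j ≥ b > a`, of letters `(i, a)` with `i ≥ b > a`, and of
letters with minimum `a`, and the multiplicities are differences of these counts. -/
theorem sum_hgen_injective :
    Function.Injective fun s : Multiset (Fin N × Fin N) => (s.map hgen).sum := by
  intro s s' h
  have h : ∀ e, (s.map hgen).sum e = (s'.map hgen).sum e := fun e => DFunLike.congr_fun h e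
  have h1 : ∀ a b : ℕ, a < b → b ≤ N →
      s.countP (fun p => (p.1 : ℕ) = a ∧ b ≤ p.2) =
        s'.countP (fun p => (p.1 : ℕ) = a ∧ b ≤ p.2) := by
    intro a b hab hb
    rw [← sum_hgen_apply s _ _ (fun p => hgen_apply_one p a b hab hb), h,
      sum_hgen_apply s' _ _ (fun p => hgen_apply_one p a b hab hb)]
  have h0 : ∀ a b : ℕ, a < b → b ≤ N →
      s.countP (fun p => (p.2 : ℕ) = a ∧ b ≤ p.1) =
        s'.countP (fun p => (p.2 : ℕ) = a ∧ b ≤ p.1) := by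
    intro a b hab hb
    rw [← sum_hgen_apply s _ _ (fun p => hgen_apply_zero p a b hab hb), h,
      sum_hgen_apply s' _ _ (fun p => hgen_apply_zero p a b hab hb)]
  have h2 : ∀ a : ℕ, s.countP (fun p => min (p.1 : ℕ) p.2 = a) =
      s'.countP (fun p => min (p.1 : ℕ) p.2 = a) := by
    intro a
    rw [← sum_hgen_apply s _ _ (fun p => hgen_apply_two p a), h,
      sum_hgen_apply s' _ _ (fun p => hgen_apply_two p a)]
  have r1 : ∀ (a b : Fin N) (t : Multiset (Fin N × Fin N)),
      t.countP (fun p => (p.1 : ℕ) = a ∧ (b : ℕ) ≤ p.2) =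
        t.count (a, b) + t.countP (fun p => (p.1 : ℕ) = a ∧ (b : ℕ) + 1 ≤ p.2) := by
    intro a b t
    induction t using Multiset.induction with
    | empty => simp
    | cons p t ih =>
      obtain ⟨i, j⟩ := p
      simp only [Multiset.countP_cons, Multiset.count_cons, ih, Prod.mk.injEq]
      split_ifs <;> omega
  have r0 : ∀ (a b : Fin N) (t : Multiset (Fin N × Fin N)),
      t.countP (fun p => (p.2 : ℕ) = a ∧ (b : ℕ) ≤ p.1) =
        t.count (b, a) + t.countP (fun p => (p.2 : ℕ) = a ∧ (b : ℕ) + 1 ≤ p.1) := by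
    intro a b t
    induction t using Multiset.induction with
    | empty => simp
    | cons p t ih =>
      obtain ⟨i, j⟩ := p
      simp only [Multiset.countP_cons, Multiset.count_cons, ih, Prod.mk.injEq]
      split_ifs <;> omega
  have r2 : ∀ (a : Fin N) (t : Multiset (Fin N × Fin N)),
      t.countP (fun p => min (p.1 : ℕ) p.2 = a) = t.count (a, a) +
        t.countP (fun p => (p.1 : ℕ) = a ∧ (a : ℕ) + 1 ≤ p.2) +
        t.countP (fun p => (p.2 : ℕ) = a ∧ (a : ℕ) + 1 ≤ p.1) := by
    intro a t
    induction t using Multiset.induction with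
    | empty => simp
    | cons p t ih =>
      obtain ⟨i, j⟩ := p
      simp only [Multiset.countP_cons, Multiset.count_cons, ih, Prod.mk.injEq]
      split_ifs <;> omega
  ext ⟨a, b⟩
  rcases lt_trichotomy a b with hab | rfl | hab
  · have e1 := r1 a b s
    have e2 := r1 a b s'
    rw [h1 a b hab b.2.le, h1 a (b + 1) (by omega) b.2] at e1
    omega
  · have e1 := r2 a s
    have e2 := r2 a s'
    rw [h2 a, h1 a (a + 1) (by omega) a.2, h0 a (a + 1) (by omega) a.2] at e1
    omega
  · have e1 := r0 b a s
    have e2 := r0 b a s'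
    rw [h0 b a hab a.2.le, h0 b (a + 1) (by omega) a.2] at e1
    omega

end Ops

/-! ### Straightening words in the free algebra -/

section Main
open Finsupp

/-- The index of a generator; the lexicographic order is the one used to order words. -/
abbrev Letter (N : ℕ) := Fin N ×ₗ Fin N

/-- The generator of the free algebra with index `a`. -/
noncomputable def u (a : Letter N) : FreeAlgebra ℂ (Fin N × Fin N) := FreeAlgebra.ι ℂ (ofLex a)

/-- The product of the generators indexed by a list of letters. -/
noncomputable def word (l : List (Letter N)) : FreeAlgebra ℂ (Fin N × Fin N) := (l.map u).prod

/-- The ordered word whose letters are the elements of the multiset `s` of size `k`. -/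
noncomputable def stdWord (N k : ℕ) (s : Sym (Letter N) k) : FreeAlgebra ℂ (Fin N × Fin N) :=
  word (s : Multiset (Letter N)).sort

/-- The matrix `u` of generators. -/
noncomputable def uMat (N : ℕ) : Matrix (Fin N) (Fin N) (FreeAlgebra ℂ (Fin N × Fin N)) :=
  fun i j => FreeAlgebra.ι ℂ (i, j)

/-- The matrix `R̂ u₁ u₂ - u₁ u₂ R̂` of relators. -/
noncomputable def relMat (q : ℂ) (N : ℕ) :
    Matrix (Fin N × Fin N) (Fin N × Fin N) (FreeAlgebra ℂ (Fin N × Fin N)) :=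
  (Rhat N q).map (algebraMap ℂ _) * TT (uMat N) - TT (uMat N) * (Rhat N q).map (algebraMap ℂ _)

theorem u1_mul_u2 : u1mat N * u2mat N = TT (uMat N) := by
  ext1 ⟨i, j⟩ ⟨k, l⟩
  simp [Matrix.mul_apply, u1mat, u2mat, TT, uMat, Fintype.sum_prod_type]

/-- The two-sided ideal generated by the RTT relators. -/
noncomputable def relIdeal (q : ℂ) (N : ℕ) : Submodule ℂ (FreeAlgebra ℂ (Fin N × Fin N)) :=
  twoSidedSpan N {x | ∃ p r, x = relMat q N p r}

theorem relMat_mem (p r : Fin N × Fin N) : relMat q N p r ∈ relIdeal q N :=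
  Submodule.subset_span ⟨1, 1, _, ⟨p, r, rfl⟩, by simp⟩

theorem mul_mem_relIdeal {x : FreeAlgebra ℂ (Fin N × Fin N)} (hx : x ∈ relIdeal q N)
    (a b : FreeAlgebra ℂ (Fin N × Fin N)) : a * x * b ∈ relIdeal q N := by
  unfold relIdeal twoSidedSpan at hx
  induction hx using Submodule.span_induction with
  | mem x hx =>
    obtain ⟨c, d, r, hr, rfl⟩ := hx
    exact Submodule.subset_span ⟨a * c, d * b, r, hr, by simp only [mul_assoc]⟩
  | zero => simp
  | add x y _ _ hx hy => rw [mul_add, add_mul]; exact add_mem hx hy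
  | smul t x _ hx => rw [mul_smul_comm, smul_mul_assoc]; exact Submodule.smul_mem _ _ hx

/-- The representation of the free algebra on the Fock space sending the matrix of generators to
`gen`. -/
noncomputable def rep (q : ℂ) (N : ℕ) :
    FreeAlgebra ℂ (Fin N × Fin N) →ₐ[ℂ] Module.End ℂ Fock :=
  FreeAlgebra.lift ℂ fun p => gen q N p.1 p.2

theorem rep_relMat (hq : q ≠ 0) (p r : Fin N × Fin N) : rep q N (relMat q N p r) = 0 := by
  obtain ⟨i, j⟩ := p
  obtain ⟨k, l⟩ := r
  have := (gen_RTT (N := N) hq).entry i j k l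
  rw [relMat, Matrix.sub_apply, R_mul_apply, mul_R_apply, map_sub, sub_eq_zero]
  simp only [TT, uMat, map_add, map_smul, map_mul, rep, FreeAlgebra.lift_ι_apply]
  exact this

theorem rep_relIdeal (hq : q ≠ 0) {x : FreeAlgebra ℂ (Fin N × Fin N)} (hx : x ∈ relIdeal q N) :
    rep q N x = 0 := by
  unfold relIdeal twoSidedSpan at hx
  induction hx using Submodule.span_induction with
  | mem x hx =>
    obtain ⟨c, d, r, ⟨p, s, rfl⟩, rfl⟩ := hx
    simp [rep_relMat hq]
  | zero => simp
  | add x y _ _ hx hy => simp [hx, hy]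
  | smul t x _ hx => simp [hx]

/-- Straightening rule: modulo the relations, a descent `u y * u x` with `x < y` is a combination of
products that start with a letter smaller than `y`. -/
theorem swap (x y : Letter N) (hxy : x < y) : ∃ (c₁ c₂ : ℂ) (x' y' : Letter N),
    x' < y ∧ u y * u x - (c₁ • (u x * u y) + c₂ • (u x' * u y')) ∈ relIdeal q N := by
  obtain ⟨⟨i, k⟩, rfl⟩ := toLex.surjective x
  obtain ⟨⟨j, l⟩, rfl⟩ := toLex.surjective y
  have key : ∀ i j k l, _ := fun i j k l => relMat_mem (q := q) (N := N) (i, j) (k, l)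
  simp only [relMat, Matrix.sub_apply, R_mul_apply, mul_R_apply, TT, uMat] at key
  simp only [u, ofLex_toLex]
  rw [Prod.Lex.toLex_lt_toLex] at hxy
  dsimp only at hxy
  rcases hxy with hij | ⟨rfl, hkl⟩
  · have hlt : toLex (i, l) < toLex (j, l) := Prod.Lex.toLex_lt_toLex.2 (Or.inl hij)
    rcases lt_trichotomy k l with hkl | rfl | hkl
    · refine ⟨1, q - q⁻¹, toLex (i, l), toLex (j, k), hlt, ?_⟩
      have := key i j l k
      simp only [hij.ne, hij.not_gt, hkl.ne', hkl, if_true, if_false, zero_smul, one_smul,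
        add_zero] at this
      simpa using this
    · refine ⟨q, 0, toLex (i, k), toLex (j, k), hlt, ?_⟩
      have := key i j k k
      simpa only [hij.ne, hij.not_gt, lt_irrefl, if_true, if_false, zero_smul, one_smul,
        add_zero] using this
    · refine ⟨1, 0, toLex (i, k), toLex (j, k), Prod.Lex.toLex_lt_toLex.2 (Or.inl hij), ?_⟩
      have := key i j l k
      simpa only [hij.ne, hij.not_gt, hkl.ne, hkl.not_gt, if_true, if_false, zero_smul, one_smul,
        add_zero] using this
  · refine ⟨q, 0, toLex (i, k), toLex (i, k),
      Prod.Lex.toLex_lt_toLex.2 (Or.inr ⟨rfl, hkl⟩), ?_⟩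
    have := neg_mem (key i i k l)
    simpa only [hkl.ne, hkl.not_gt, lt_irrefl, if_true, if_false, zero_smul, one_smul,
        add_zero, neg_sub] using this

theorem exists_descent {α : Type*} [LinearOrder α] (l : List α) (h : ¬ l.Pairwise (· ≤ ·)) :
    ∃ l₁ x y l₂, x < y ∧ l = l₁ ++ y :: x :: l₂ := by
  rw [← List.isChain_iff_pairwise] at h
  induction l with
  | nil => simp at h
  | cons a l ih =>
    cases l with
    | nil => simp at h
    | cons b l =>
      by_cases hab : b < a
      · exact ⟨[], b, a, l, hab, rfl⟩
      · rw [List.isChain_cons_cons, not_and] at h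
        obtain ⟨l₁, x, y, l₂, hxy, he⟩ := ih (h (not_lt.1 hab))
        exact ⟨a :: l₁, x, y, l₂, hxy, by rw [he, List.cons_append]⟩

theorem word_append (l l' : List (Letter N)) : word (l ++ l') = word l * word l' := by
  simp [word]

/-- Ordered words span all words of length `k` modulo the relations. The straightening rule replaces
a word with a descent by lexicographically smaller words of the same length, and there are finitely
many of those. -/
theorem word_mem (k : ℕ) (l : {l : List (Letter N) // l.length = k}) : word l.1 ∈
    Submodule.span ℂ (Set.range (stdWord N k)) ⊔
      relIdeal q N := by
  have : Finite {l : List (Letter N) // l.length = k} :=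
    inferInstanceAs (Finite (List.Vector (Letter N) k))
  induction l using WellFoundedLT.induction with
  | ind l ih =>
  obtain ⟨l, hl⟩ := l
  by_cases hs : l.Pairwise (· ≤ ·)
  · refine Submodule.mem_sup_left (Submodule.subset_span ⟨⟨(l : Multiset _), by simpa using hl⟩, ?_⟩)
    have : (l : Multiset (Letter N)).sort = l := by
      refine List.Perm.eq_of_pairwise' (r := (· ≤ ·)) (Multiset.pairwise_sort _ _) hs ?_
      rw [← Multiset.coe_eq_coe, Multiset.sort_eq]
    exact congrArg word this
  · obtain ⟨l₁, x, y, l₂, hxy, rfl⟩ := exists_descent l hs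
    obtain ⟨c₁, c₂, x', y', hx', hrel⟩ := swap (q := q) x y hxy
    have hlt : ∀ z z' : Letter N, z < y →
        word (l₁ ++ z :: z' :: l₂) ∈ Submodule.span ℂ (Set.range (stdWord N k)) ⊔ relIdeal q N := fun z z' hz =>
      ih ⟨l₁ ++ z :: z' :: l₂, by simpa using hl⟩
        (List.append_left_lt (List.cons_lt_cons_iff.2 (Or.inl hz)))
    have e : ∀ z z' : Letter N, word (l₁ ++ z :: z' :: l₂) = word l₁ * (u z * u z') * word l₂ := by
      intro z z'
      simp [word, mul_assoc]
    have h1 := mul_mem_relIdeal hrel (word l₁) (word l₂)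
    have h2 := Submodule.smul_mem _ c₁ (hlt x y hxy)
    have h3 := Submodule.smul_mem _ c₂ (hlt x' y' hx')
    have h4 := add_mem (Submodule.mem_sup_right h1) (add_mem h2 h3)
    simp only [e] at h4 ⊢
    convert h4 using 1
    simp only [mul_sub, sub_mul, mul_add, add_mul, mul_smul_comm, smul_mul_assoc]
    abel

theorem word_mem_degComp (l : List (Letter N)) : word l ∈ degComp N l.length :=
  Submodule.subset_span ⟨l.map ofLex, by simp, by rw [List.map_map]; rfl⟩

theorem stdWord_mem_degComp {k : ℕ} (s : Sym (Letter N) k) : stdWord N k s ∈ degComp N k := by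
  have h : (s : Multiset (Letter N)).sort.length = k := by
    rw [Multiset.length_sort]
    exact s.2
  have := word_mem_degComp (s : Multiset (Letter N)).sort
  rw [h] at this
  rw [stdWord]
  exact this

theorem degComp_le (k : ℕ) : degComp N k ≤
    Submodule.span ℂ (Set.range (stdWord N k)) ⊔
      relIdeal q N := by
  refine Submodule.span_le.2 ?_
  rintro _ ⟨l, hl, rfl⟩
  have := word_mem (q := q) k ⟨l.map toLex, by simpa using hl⟩
  rw [word, List.map_map] at this
  exact this

/-! ### The basis of ordered words -/

/-- The value of the representation at the constant polynomial `1`. It vanishes on the relations. -/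
noncomputable def evalVac (q : ℂ) (N : ℕ) : FreeAlgebra ℂ (Fin N × Fin N) →ₗ[ℂ] Fock :=
  (LinearMap.applyₗ (Finsupp.single 0 1)).comp (rep q N).toLinearMap

/-- The image of an ordered word in the Fock space. -/
noncomputable def vec (q : ℂ) (N k : ℕ) (s : Sym (Letter N) k) : Fock :=
  evalVac q N (stdWord N k s)

/-- The leading exponent of `vec`. -/
noncomputable def expo (N k : ℕ) (s : Sym (Letter N) k) : Expo :=
  ((s : Multiset (Letter N)).map fun a => hgen (ofLex a)).sum

theorem expo_injective (N k : ℕ) : Function.Injective (expo N k) := by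
  intro s s' h
  apply Subtype.ext
  have h' := sum_hgen_injective (N := N)
    (a₁ := (s : Multiset (Letter N)).map ofLex) (a₂ := (s' : Multiset (Letter N)).map ofLex)
    (by simpa [expo, Multiset.map_map, Function.comp_def] using h)
  exact Multiset.map_injective ofLex.injective h'

theorem vec_lead (hq : q ≠ 0) (k : ℕ) (s : Sym (Letter N) k) : ∃ c : ℂ, c ≠ 0 ∧
    vec q N k s - c • single (expo N k s) 1 ∈ Low (wt N) (wt N (expo N k s) - 1) := by
  obtain ⟨c, hc, h⟩ := isLead_list_prod (w := wt N) (h := fun a : Letter N => hgen (ofLex a))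
    (X := fun a => gen q N (ofLex a).1 (ofLex a).2) (fun a => gen_lead hq _)
    (s : Multiset _).sort 0
  have e : (((s : Multiset (Letter N)).sort).map fun a => hgen (ofLex a)).sum = expo N k s := by
    rw [expo]
    conv_rhs => rw [← Multiset.sort_eq (s : Multiset (Letter N)) (· ≤ ·)]
    rw [Multiset.map_coe, Multiset.sum_coe]
  have e' : vec q N k s = (((s : Multiset (Letter N)).sort).map fun a =>
      gen q N (ofLex a).1 (ofLex a).2).prod (single 0 1) := by
    simp [vec, stdWord, evalVac, word, u, rep, map_list_prod, Function.comp_def]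
  rw [e, ← e', zero_add, map_zero, zero_add] at h
  exact ⟨c, hc, h⟩

theorem vec_linearIndependent (hq : q ≠ 0) (k : ℕ) : LinearIndependent ℂ (vec q N k) :=
  linearIndependent_of_lead (expo_injective N k) (vec_lead hq k)

/-- If `v` spans `D` modulo `I` and becomes linearly independent under a map that vanishes on `I`,
then `v` induces a basis of `D / (D ∩ I)`. -/
theorem finrank_quot_of_complement {A F ι : Type*} [AddCommGroup A] [Module ℂ A] [AddCommGroup F]
    [Module ℂ F] [Fintype ι] (D I : Submodule ℂ A) (v : ι → A) (hv : ∀ s, v s ∈ D)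
    (hD : D ≤ Submodule.span ℂ (Set.range v) ⊔ I) (φ : A →ₗ[ℂ] F) (hφ : ∀ x ∈ I, φ x = 0)
    (hli : LinearIndependent ℂ fun s => φ (v s)) :
    Module.finrank ℂ (↥D ⧸ I.comap D.subtype) = Fintype.card ι := by
  set K := I.comap D.subtype with hK
  let b : ι → ↥D ⧸ K := fun s => K.mkQ ⟨v s, hv s⟩
  have hli : LinearIndependent ℂ b := by
    have hle : K ≤ LinearMap.ker (φ.comp D.subtype) := fun x hx => hφ _ hx
    exact LinearIndependent.of_comp (K.liftQ _ hle) hli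
  have hvD : Submodule.span ℂ (Set.range v) ≤ D :=
    Submodule.span_le.2 (by rintro _ ⟨s, rfl⟩; exact hv s)
  have hb : ∀ y (hy : y ∈ Submodule.span ℂ (Set.range v)),
      K.mkQ ⟨y, hvD hy⟩ ∈ Submodule.span ℂ (Set.range b) := by
    intro y hy
    induction hy using Submodule.span_induction with
    | mem y hy => obtain ⟨s, rfl⟩ := hy; exact Submodule.subset_span ⟨s, rfl⟩
    | zero => exact Submodule.zero_mem _
    | add y y' hy hy' h h' => exact add_mem h h'
    | smul t y hy h => exact Submodule.smul_mem _ t h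
  have hsp : ⊤ ≤ Submodule.span ℂ (Set.range b) := by
    rintro x -
    obtain ⟨⟨x, hx⟩, rfl⟩ := K.mkQ_surjective x
    obtain ⟨y, hy, z, hz, rfl⟩ := Submodule.mem_sup.1 (hD hx)
    have e : K.mkQ ⟨y + z, hx⟩ = K.mkQ ⟨y, hvD hy⟩ := by
      rw [← sub_eq_zero, ← map_sub, Submodule.mkQ_apply, Submodule.Quotient.mk_eq_zero]
      simpa [K] using hz
    rw [e]
    exact hb y hy
  exact Module.finrank_eq_card_basis (Module.Basis.mk hli hsp)

theorem finrank_quot (hq : q ≠ 0) (k : ℕ) :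
    Module.finrank ℂ (↥(degComp N k) ⧸ ((relIdeal q N).comap (degComp N k).subtype)) =
      Nat.choose (N ^ 2 + k - 1) k := by
  have hker : ∀ x ∈ relIdeal q N, evalVac q N x = 0 := fun x hx => by
    simp [evalVac, rep_relIdeal hq hx]
  have h := finrank_quot_of_complement (degComp N k) (relIdeal q N) (stdWord N k) stdWord_mem_degComp
    (degComp_le k) (evalVac q N) hker (vec_linearIndependent hq k)
  rw [h, Sym.card_sym_eq_choose, Fintype.card_lex, Fintype.card_prod, Fintype.card_fin, sq]

end Main

end QMat

/-- For `q` transcendental, the quantum matrix bialgebra `M_q(N)` with `N²`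
generators `u` and the RTT relations `R̂ u₁ u₂ = u₁ u₂ R̂` is a flat
deformation of the polynomial ring in `N²` variables: its degree-`k`
component has dimension `C(N² + k - 1, k)`. -/
theorem quantum_matrix_bialgebra_flat (N : ℕ) (hN : 2 ≤ N) (q : ℂ)
    (hq : Transcendental ℚ q) :
    ∀ RF relMat J,
      RF = (Rhat N q).map (algebraMap ℂ (FreeAlgebra ℂ (Fin N × Fin N))) →
      relMat = RF * u1mat N * u2mat N - u1mat N * u2mat N * RF →
      J = twoSidedSpan N {x | ∃ p r, x = relMat p r} →
      ∀ k : ℕ,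
        Module.finrank ℂ
          (↥(degComp N k) ⧸ (J.comap (degComp N k).subtype)) =
        Nat.choose (N ^ 2 + k - 1) k := by
  intro RF relMat J hRF hrel hJ k
  subst hRF hrel hJ
  have hq0 : q ≠ 0 := by
    rintro rfl
    exact hq isAlgebraic_zero
  rw [mul_assoc, QMat.u1_mul_u2]
  exact QMat.finrank_quot hq0 k
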